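/- Let U ⊆ ℝⁿ be open, let v : ℝⁿ → ℝⁿ be a C¹ vector field with div v = 0 on U, let Pe and μ be real constants, and let φ, φ† : ℝⁿ → ℝ be C² functions satisfying on U the direct eigenvalue equation div(Pe v φ − ∇φ) = μ φ and the adjoint eigenvalue equation −Pe v·∇φ† − Δφ† = μ φ†. Then the modified drift field Pe v* := Pe v φ φ† + φ ∇φ† − φ† ∇φ is divergence-free on U: div( Pe v φ φ† + φ ∇φ† − φ† ∇φ ) = 0 at every point of U. -/

import Mathlib

/-!
The modified drift is the sum of products `φ† (Pe v φ − ∇φ) + φ ∇φ†`. By the Leibniz rule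
`div (f F) = f div F + ∇f · F` (`vdiv_mul`), its divergence is
`φ† div (Pe v φ − ∇φ) + Pe φ v·∇φ† − ∇φ†·∇φ + φ Δφ† + ∇φ·∇φ†`.
The gradient products cancel; the direct equation turns the first term into `μ φ φ†`, and the
adjoint equation turns `φ (Pe v·∇φ† + Δφ†)` into `−μ φ φ†`.
-/

/-- Gradient of a scalar field on `ℝⁿ` (components w.r.t. the standard basis). -/
noncomputable def vgrad {n : ℕ} (f : (Fin n → ℝ) → ℝ) (x : Fin n → ℝ) : Fin n → ℝ :=
  fun i => fderiv ℝ f x (Pi.single i 1)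

/-- Divergence of a vector field on `ℝⁿ`: `∑ i, ∂ᵢ Fᵢ`. -/
noncomputable def vdiv {n : ℕ} (F : (Fin n → ℝ) → (Fin n → ℝ)) (x : Fin n → ℝ) : ℝ :=
  ∑ i, fderiv ℝ (fun y => F y i) x (Pi.single i 1)

lemma vdiv_add {n : ℕ} {F G : (Fin n → ℝ) → (Fin n → ℝ)} {x : Fin n → ℝ}
    (hF : ∀ i, DifferentiableAt ℝ (fun y => F y i) x)
    (hG : ∀ i, DifferentiableAt ℝ (fun y => G y i) x) :
    vdiv (fun y i => F y i + G y i) x = vdiv F x + vdiv G x := by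
  simp only [vdiv, ← Finset.sum_add_distrib]
  refine Finset.sum_congr rfl fun i _ => ?_
  rw [fderiv_fun_add (hF i) (hG i)]
  rfl

lemma vdiv_mul {n : ℕ} {f : (Fin n → ℝ) → ℝ} {F : (Fin n → ℝ) → (Fin n → ℝ)} {x : Fin n → ℝ}
    (hf : DifferentiableAt ℝ f x) (hF : ∀ i, DifferentiableAt ℝ (fun y => F y i) x) :
    vdiv (fun y i => f y * F y i) x = f x * vdiv F x + ∑ i, F x i * vgrad f x i := by
  simp only [vdiv, vgrad, Finset.mul_sum, ← Finset.sum_add_distrib]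
  refine Finset.sum_congr rfl fun i _ => ?_
  rw [fderiv_fun_mul hf (hF i)]
  rfl

lemma differentiable_vgrad {n : ℕ} {f : (Fin n → ℝ) → ℝ} (hf : ContDiff ℝ 2 f) (i : Fin n) :
    Differentiable ℝ (fun y => vgrad f y i) := by
  have h : ContDiff ℝ 1 (fderiv ℝ f) := hf.fderiv_right (by norm_num)
  exact (h.differentiable (by norm_num)).clm_apply (differentiable_const _)

/-- The modified drift field `Pe v* = Pe v φφ† + φ∇φ† − φ†∇φ` is divergence-free,
given the direct and adjoint eigenvalue equations and a solenoidal velocity `v`. -/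
theorem modified_drift_divergence_free {n : ℕ}
    (U : Set (Fin n → ℝ)) (hU : IsOpen U)
    (v : (Fin n → ℝ) → (Fin n → ℝ)) (hv : ContDiff ℝ 1 v)
    (hdivv : ∀ x ∈ U, vdiv v x = 0)
    (Pe μ : ℝ) (φ φd : (Fin n → ℝ) → ℝ)
    (hφ : ContDiff ℝ 2 φ) (hφd : ContDiff ℝ 2 φd)
    (hdirect : ∀ x ∈ U,
      vdiv (fun y i => Pe * v y i * φ y - vgrad φ y i) x = μ * φ x)
    (hadj : ∀ x ∈ U,
      -Pe * (∑ i, v x i * vgrad φd x i) - vdiv (vgrad φd) x = μ * φd x) :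
    ∀ x ∈ U,
      vdiv (fun y i =>
        Pe * v y i * (φ y * φd y) + φ y * vgrad φd y i - φd y * vgrad φ y i) x = 0 := by
  intro x hx
  have dv : ∀ i, Differentiable ℝ (fun y => v y i) :=
    differentiable_pi.1 (hv.differentiable (by norm_num))
  have dφ : Differentiable ℝ φ := hφ.differentiable (by norm_num)
  have dφd : Differentiable ℝ φd := hφd.differentiable (by norm_num)
  have dflux : ∀ i, DifferentiableAt ℝ (fun y => Pe * v y i * φ y - vgrad φ y i) x := fun i =>
    ((((dv i).const_mul Pe).mul dφ).sub (differentiable_vgrad hφ i)) x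
  have dgrad : ∀ i, DifferentiableAt ℝ (fun y => vgrad φd y i) x := fun i =>
    differentiable_vgrad hφd i x
  have hsplit : (fun y i =>
        Pe * v y i * (φ y * φd y) + φ y * vgrad φd y i - φd y * vgrad φ y i) =
      fun y i => φd y * (Pe * v y i * φ y - vgrad φ y i) + φ y * vgrad φd y i := by
    funext y i
    ring
  rw [hsplit, vdiv_add (fun i => (dφd x).fun_mul (dflux i)) (fun i => (dφ x).fun_mul (dgrad i)),
    vdiv_mul (dφd x) dflux, vdiv_mul (dφ x) dgrad, hdirect x hx]
  have hsum : ∑ i, (Pe * v x i * φ x - vgrad φ x i) * vgrad φd x i =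
      Pe * φ x * (∑ i, v x i * vgrad φd x i) - ∑ i, vgrad φd x i * vgrad φ x i := by
    rw [Finset.mul_sum, ← Finset.sum_sub_distrib]
    exact Finset.sum_congr rfl fun i _ => by ring
  rw [hsum]
  linear_combination (-φ x) * hadj x hx
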